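/- arXiv:2604.13727 — 6 statements merged into one kernel-verified Lean document; each statement's English description precedes it below -/
import Mathlib

section
/- Let f : ℝⁿ → ℝⁿ be continuous, h : ℝⁿ → ℝ continuous, and H = {x ∈ ℝⁿ : h(x) = 0} with 0 ∈ H. Let x₁* = 0, x₂*, …, x_k* ∈ H be pairwise distinct points with f(xᵢ*) = 0 for all i. Suppose V : ℝⁿ → ℝ is continuously differentiable with V(0) = 0, V(x) > 0 for every x ∈ H with x ≠ 0, and there exists ε > 0 such that ⟨∇V(x), f(x)⟩ ≤ −ε · ∏_{i=1}^{k} ‖x − xᵢ*‖² for all x ∈ H. Then 0 is locally asymptotically stable for solutions on H: (i) for every r > 0 there exists δ > 0 such that every global solution on H with ‖x(0)‖ < δ satisfies ‖x(t)‖ < r for all t ≥ 0; and (ii) there exists δ > 0 such that every global solution on H with ‖x(0)‖ < δ satisfies x(t) → 0 as t → ∞. -/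
open scoped RealInnerProductSpace

/-- A global solution on `H = {x | h x = 0}` of the autonomous system `ẋ = f(x)`:
a differentiable curve `x : [0,∞) → ℝⁿ` with `x′(t) = f(x(t))` and `x(t) ∈ H`
for all `t ≥ 0`. -/
def IsGlobalSolutionOn {n : ℕ}
    (f : EuclideanSpace ℝ (Fin n) → EuclideanSpace ℝ (Fin n))
    (h : EuclideanSpace ℝ (Fin n) → ℝ) (x : ℝ → EuclideanSpace ℝ (Fin n)) : Prop :=
  ∀ t : ℝ, 0 ≤ t → HasDerivWithinAt x (f (x t)) (Set.Ici 0) t ∧ h (x t) = 0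

open Set Filter Topology

namespace IsGlobalSolutionOn

variable {n : ℕ} {f : EuclideanSpace ℝ (Fin n) → EuclideanSpace ℝ (Fin n)}
  {h : EuclideanSpace ℝ (Fin n) → ℝ} {x : ℝ → EuclideanSpace ℝ (Fin n)}

theorem continuousOn (hx : IsGlobalSolutionOn f h x) : ContinuousOn x (Ici 0) :=
  fun t ht => (hx t ht).1.continuousWithinAt

/-- The time shift of a global solution is a global solution. -/
theorem comp_add_const (hx : IsGlobalSolutionOn f h x) {s : ℝ} (hs : 0 ≤ s) :
    IsGlobalSolutionOn f h fun t => x (t + s) := by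
  intro t ht
  refine ⟨?_, (hx (t + s) (by positivity)).2⟩
  have hshift : HasDerivWithinAt (fun t : ℝ => t + s) 1 (Ici 0) t :=
    ((hasDerivAt_id t).add_const s).hasDerivWithinAt
  have hmaps : MapsTo (fun t : ℝ => t + s) (Ici 0) (Ici 0) := fun u hu => add_nonneg hu hs
  simpa [Function.comp_def] using
    HasDerivWithinAt.scomp t (hx (t + s) (by positivity)).1 hshift hmaps

theorem hasDerivWithinAt_comp (hx : IsGlobalSolutionOn f h x)
    {V : EuclideanSpace ℝ (Fin n) → ℝ} (hV : Differentiable ℝ V) {t : ℝ} (ht : 0 ≤ t) :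
    HasDerivWithinAt (fun t => V (x t)) ⟪gradient V (x t), f (x t)⟫ (Ici 0) t := by
  have key := (hV (x t)).hasGradientAt.hasFDerivAt.comp_hasDerivWithinAt t (hx t ht).1
  simpa [Function.comp_def] using key

/-- If `V` decreases at rate at least `c` along a solution, it decreases at least linearly. -/
theorem comp_le_sub_mul (hx : IsGlobalSolutionOn f h x)
    {V : EuclideanSpace ℝ (Fin n) → ℝ} (hV : Differentiable ℝ V) {c : ℝ}
    (hc : ∀ t, 0 ≤ t → ⟪gradient V (x t), f (x t)⟫ ≤ -c) {t : ℝ} (ht : 0 ≤ t) :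
    V (x t) ≤ V (x 0) - c * t := by
  have hderiv : ∀ u, 0 ≤ u → HasDerivWithinAt (fun t => V (x t) + c * t)
      (⟪gradient V (x u), f (x u)⟫ + c) (Ici 0) u := fun u hu =>
    (hx.hasDerivWithinAt_comp hV hu).add (hasDerivAt_const_mul c).hasDerivWithinAt
  have hanti : AntitoneOn (fun t => V (x t) + c * t) (Ici 0) := by
    refine antitoneOn_of_hasDerivWithinAt_nonpos (convex_Ici 0)
      (fun u hu => (hderiv u hu).continuousWithinAt)
      (fun u hu => (hderiv u (interior_subset hu)).mono interior_subset)
      (fun u hu => ?_)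
    linarith [hc u (interior_subset hu)]
  have := hanti self_mem_Ici ht ht
  simp only [mul_zero, add_zero] at this
  linarith

end IsGlobalSolutionOn

/-- A continuous function that is positive on a compact set has a positive lower bound there. -/
theorem IsCompact.exists_pos_forall_le {X : Type*} [TopologicalSpace X] {K : Set X}
    (hK : IsCompact K) {g : X → ℝ} (hg : ContinuousOn g K) (hpos : ∀ y ∈ K, 0 < g y) :
    ∃ m > 0, ∀ y ∈ K, m ≤ g y := by
  rcases K.eq_empty_or_nonempty with rfl | hne
  · exact ⟨1, one_pos, by simp⟩
  · obtain ⟨y, hy, hmin⟩ := hK.exists_isMinOn hne hg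
    exact ⟨g y, hpos y hy, fun z hz => hmin hz⟩

section Lyapunov

variable {n : ℕ} {f : EuclideanSpace ℝ (Fin n) → EuclideanSpace ℝ (Fin n)}
  {h V : EuclideanSpace ℝ (Fin n) → ℝ}

/-- Lyapunov stability of the origin for solutions on `{h = 0}`. -/
theorem lyapunov_stable (hh : Continuous h) (hV : Differentiable ℝ V) (hV0 : V 0 = 0)
    (hVpos : ∀ x, h x = 0 → x ≠ 0 → 0 < V x)
    (hVdot : ∀ x, h x = 0 → ⟪gradient V x, f x⟫ ≤ 0) {r : ℝ} (hr : 0 < r) :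
    ∃ δ > 0, ∀ x : ℝ → EuclideanSpace ℝ (Fin n),
      IsGlobalSolutionOn f h x → ‖x 0‖ < δ → ∀ t ≥ (0 : ℝ), ‖x t‖ < r := by
  obtain ⟨m, hm, hmV⟩ : ∃ m > 0, ∀ y ∈ Metric.sphere 0 r ∩ {y | h y = 0}, m ≤ V y := by
    refine ((isCompact_sphere 0 r).inter_right
      (isClosed_eq hh continuous_const)).exists_pos_forall_le hV.continuous.continuousOn ?_
    rintro y ⟨hyr, hy⟩
    exact hVpos y hy (ne_zero_of_mem_sphere hr.ne' ⟨y, hyr⟩)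
  obtain ⟨d, hd, hdV⟩ := Metric.eventually_nhds_iff.1
    (hV.continuous.continuousAt.eventually_lt_const (hV0.trans_lt hm))
  refine ⟨min d r, lt_min hd hr, fun x hx hx0 t ht => ?_⟩
  by_contra! hrt
  have hcont : ContinuousOn (fun s => ‖x s‖) (Icc 0 t) :=
    (hx.continuousOn.mono Icc_subset_Ici_self).norm
  obtain ⟨s, hs, hsr⟩ := intermediate_value_Icc ht hcont
    ⟨(hx0.trans_le (min_le_right d r)).le, hrt⟩
  have hle := hx.comp_le_sub_mul hV (c := 0)
    (fun u hu => by simpa using hVdot (x u) (hx u hu).2) hs.1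
  have hlt : V (x 0) < m := hdV (by simpa using hx0.trans_le (min_le_left d r))
  have hge := hmV (x s) ⟨by simpa using hsr, (hx s hs.1).2⟩
  linarith

/-- A solution on `{h = 0}` that stays in a closed ball on which the decay rate `W` of `V` vanishes
only at the origin comes arbitrarily close to the origin. -/
theorem exists_norm_lt_of_decay (hV : Differentiable ℝ V) (hV0 : V 0 = 0)
    (hVpos : ∀ x, h x = 0 → x ≠ 0 → 0 < V x)
    {W : EuclideanSpace ℝ (Fin n) → ℝ} (hW : Continuous W)
    (hVdot : ∀ x, h x = 0 → ⟪gradient V x, f x⟫ ≤ -W x) {r : ℝ}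
    (hWpos : ∀ x, ‖x‖ ≤ r → x ≠ 0 → 0 < W x) {x : ℝ → EuclideanSpace ℝ (Fin n)}
    (hx : IsGlobalSolutionOn f h x) (hxr : ∀ t ≥ (0 : ℝ), ‖x t‖ ≤ r) {d : ℝ} (hd : 0 < d) :
    ∃ t ≥ (0 : ℝ), ‖x t‖ < d := by
  by_contra! hfar
  obtain ⟨c, hc, hcW⟩ : ∃ c > 0, ∀ y ∈ Metric.closedBall 0 r ∩ {y | d ≤ ‖y‖}, c ≤ W y := by
    refine ((isCompact_closedBall 0 r).inter_right
      (isClosed_le continuous_const continuous_norm)).exists_pos_forall_le hW.continuousOn ?_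
    rintro y ⟨hyr, hy⟩
    exact hWpos y (by simpa using hyr) (norm_pos_iff.1 (hd.trans_le hy))
  have hnonneg : ∀ y, h y = 0 → 0 ≤ V y := fun y hy => by
    rcases eq_or_ne y 0 with rfl | hne
    · exact hV0.ge
    · exact (hVpos y hy hne).le
  have hrate : ∀ t, 0 ≤ t → ⟪gradient V (x t), f (x t)⟫ ≤ -c := fun t ht =>
    (hVdot _ (hx t ht).2).trans
      (neg_le_neg (hcW _ ⟨by simpa using hxr t ht, hfar t ht⟩))
  have hV0nonneg := hnonneg _ (hx 0 le_rfl).2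
  have hT : 0 ≤ (V (x 0) + 1) / c := by positivity
  have hle := hx.comp_le_sub_mul hV hrate hT
  rw [mul_div_cancel₀ _ hc.ne'] at hle
  linarith [hnonneg _ (hx _ hT).2]

end Lyapunov

theorem stmt_0 (n k : ℕ) (hk : 0 < k)
    (f : EuclideanSpace ℝ (Fin n) → EuclideanSpace ℝ (Fin n)) (hf : Continuous f)
    (h : EuclideanSpace ℝ (Fin n) → ℝ) (hh : Continuous h)
    (h0 : h 0 = 0)
    (xs : Fin k → EuclideanSpace ℝ (Fin n))
    (hxs0 : xs ⟨0, hk⟩ = 0)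
    (hxsH : ∀ i, h (xs i) = 0)
    (hxs_distinct : Function.Injective xs)
    (hxs_eq : ∀ i, f (xs i) = 0)
    (V : EuclideanSpace ℝ (Fin n) → ℝ) (hV : ContDiff ℝ 1 V)
    (hV0 : V 0 = 0)
    (hVpos : ∀ x, h x = 0 → x ≠ 0 → 0 < V x)
    (ε : ℝ) (hε : 0 < ε)
    (hVdot : ∀ x, h x = 0 →
      ⟪gradient V x, f x⟫ ≤ -ε * ∏ i : Fin k, ‖x - xs i‖ ^ 2) :
    (∀ r > 0, ∃ δ > 0, ∀ x : ℝ → EuclideanSpace ℝ (Fin n),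
        IsGlobalSolutionOn f h x → ‖x 0‖ < δ → ∀ t ≥ (0 : ℝ), ‖x t‖ < r) ∧
    (∃ δ > 0, ∀ x : ℝ → EuclideanSpace ℝ (Fin n),
        IsGlobalSolutionOn f h x → ‖x 0‖ < δ →
        Filter.Tendsto x Filter.atTop (nhds 0)) := by
  have hVd : Differentiable ℝ V := hV.differentiable one_ne_zero
  set W : EuclideanSpace ℝ (Fin n) → ℝ := fun x => ε * ∏ i : Fin k, ‖x - xs i‖ ^ 2
  have hWcont : Continuous W := by fun_prop
  have hVdotW : ∀ x, h x = 0 → ⟪gradient V x, f x⟫ ≤ -W x := fun x hx => by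
    simpa only [W, neg_mul] using hVdot x hx
  have hVdot_nonpos : ∀ x, h x = 0 → ⟪gradient V x, f x⟫ ≤ 0 := fun x hx =>
    (hVdotW x hx).trans (neg_nonpos.2 (by positivity))
  have hstable := fun r (hr : (0 : ℝ) < r) =>
    lyapunov_stable (f := f) hh hVd hV0 hVpos hVdot_nonpos hr
  refine ⟨hstable, ?_⟩
  obtain ⟨r, hr, hWpos⟩ : ∃ r > 0, ∀ x, ‖x‖ ≤ r → x ≠ 0 → 0 < W x := by
    have hfinite : (range xs \ {0}).Finite := (finite_range xs).sdiff
    obtain ⟨r, hr, hball⟩ := Metric.nhds_basis_closedBall.mem_iff.1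
      (hfinite.isClosed.isOpen_compl.mem_nhds (x := 0) (by simp))
    refine ⟨r, hr, fun x hxr hx0 => mul_pos hε (Finset.prod_pos fun i _ => ?_)⟩
    have hne : x ≠ xs i := fun hxi =>
      hball (by simpa using hxr) ⟨⟨i, hxi.symm⟩, hx0⟩
    have := norm_pos_iff.2 (sub_ne_zero.2 hne)
    positivity
  obtain ⟨δ, hδ, hδr⟩ := hstable r hr
  refine ⟨δ, hδ, fun x hx hx0 => Metric.tendsto_atTop.2 fun η hη => ?_⟩
  obtain ⟨d, hd, hdη⟩ := hstable η hη
  obtain ⟨s, hs, hsd⟩ := exists_norm_lt_of_decay hVd hV0 hVpos hWcont hVdotW hWpos hx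
    (fun t ht => (hδr x hx hx0 t ht).le) hd
  refine ⟨s, fun t hst => ?_⟩
  simpa using hdη _ (hx.comp_add_const hs) (by simpa using hsd) (t - s) (sub_nonneg.2 hst)
end

section
/- Let f : ℝⁿ → ℝⁿ be continuously differentiable, h : ℝⁿ → ℝ continuously differentiable with ∇h(x) ≠ 0 for all x ∈ H, and H = {x ∈ ℝⁿ : h(x) = 0}. Let x₂*, …, x_k* ∈ H satisfy f(x_j*) = 0, and assume for each j = 2, …, k there exist v ∈ ℝⁿ with v ≠ 0 and ⟨∇h(x_j*), v⟩ = 0, and λ > 0, such that Df(x_j*) v = λ v. Then the set {x₀ ∈ H : there exist j ∈ {2, …, k} and a global solution on H with x(0) = x₀ and x(t) → x_j* as t → ∞} has (n−1)-dimensional Hausdorff measure zero. -/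
open scoped RealInnerProductSpace

open Set Filter Topology Module
open scoped NNReal

section StableSet

variable {E : Type*} [NormedAddCommGroup E] [InnerProductSpace ℝ E]

/-- A Lyapunov-type equation: for all but finitely many shifts `μ`, the operator
`X ↦ A† X + X A - μ X` is bijective, so it takes the value `1`. -/
theorem exists_lyapunov_form [FiniteDimensional ℝ E] (A : E →L[ℝ] E) {b : ℝ} (hb : 0 < b) :
    ∃ μ ∈ Ioo 0 b, ∃ X : E →L[ℝ] E, ∀ w,
      ⟪A w, X w⟫ + ⟪w, X (A w)⟫ = μ * ⟪w, X w⟫ + ‖w‖ ^ 2 := by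
  let L : End ℝ (E →L[ℝ] E) :=
    { toFun := fun X => A.adjoint ∘L X + X ∘L A
      map_add' := fun X Y => by ext; simp; abel
      map_smul' := fun c X => by ext; simp }
  obtain ⟨μ, hμ, hμL⟩ :=
    ((Ioo_infinite hb).sdiff (End.finite_hasEigenvalue L)).nonempty
  have hinj : Function.Injective (L - algebraMap ℝ (End ℝ (E →L[ℝ] E)) μ) := by
    rw [← LinearMap.ker_eq_bot]
    by_contra hne
    exact hμL (End.hasEigenvalue_iff.2 (by rwa [End.eigenspace_def]))
  obtain ⟨X, hX⟩ := LinearMap.injective_iff_surjective.1 hinj (ContinuousLinearMap.id ℝ E)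
  refine ⟨μ, hμ, X, fun w => ?_⟩
  have hw : A.adjoint (X w) + X (A w) - μ • X w = w := by
    simpa [L] using congrArg (fun Y : E →L[ℝ] E => Y w) hX
  have := congrArg (fun z => ⟪w, z⟫) hw
  simp only [inner_sub_right, inner_add_right, inner_smul_right,
    ContinuousLinearMap.adjoint_inner_right, real_inner_self_eq_norm_sq] at this
  linarith

/-- A vector on which a quadratic form is nonpositive stays away from the line spanned by a
vector on which the form is positive. -/
theorem exists_norm_le_mul_norm_sub_smul (X : E →L[ℝ] E) {v : E} (hv : 0 < ⟪v, X v⟫) :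
    ∃ C : ℝ, 0 ≤ C ∧ ∀ w, ⟪w, X w⟫ ≤ 0 → ∀ α : ℝ, ‖w‖ ≤ C * ‖w - α • v‖ := by
  set q := ⟪v, X v⟫ with hq
  set B := (2 * ‖X‖ * ‖v‖ + ‖X‖) / q with hB
  have hB0 : 0 ≤ B := by positivity
  have hBq : B * q = 2 * ‖X‖ * ‖v‖ + ‖X‖ := by rw [hB]; field_simp
  refine ⟨1 + (B + 1) * ‖v‖, by positivity, fun w hw α => ?_⟩
  obtain ⟨d, rfl⟩ : ∃ d, w = α • v + d := ⟨w - α • v, by abel⟩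
  rw [add_sub_cancel_left]
  have bound (y z : E) : |⟪y, X z⟫| ≤ ‖X‖ * ‖y‖ * ‖z‖ := by
    refine (abs_real_inner_le_norm y (X z)).trans ?_
    nlinarith [X.le_opNorm z, norm_nonneg y]
  have hα : |α| ≤ (B + 1) * ‖d‖ := by
    by_contra! hlt
    have hdα : ‖d‖ ≤ |α| := by nlinarith [mul_nonneg hB0 (norm_nonneg d)]
    have hαpos : 0 < |α| := lt_of_le_of_lt (by positivity) hlt
    simp only [map_add, map_smul, inner_add_left, inner_add_right, inner_smul_left,
      inner_smul_right, RCLike.conj_to_real, ← hq] at hw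
    have h1 : -(α * ⟪v, X d⟫) ≤ |α| * (‖X‖ * ‖v‖ * ‖d‖) :=
      (neg_le_abs _).trans (by rw [abs_mul]; gcongr; exact bound v d)
    have h2 : -(α * ⟪d, X v⟫) ≤ |α| * (‖X‖ * ‖d‖ * ‖v‖) :=
      (neg_le_abs _).trans (by rw [abs_mul]; gcongr; exact bound d v)
    have h3 : -⟪d, X d⟫ ≤ ‖X‖ * ‖d‖ * |α| :=
      (neg_le_abs _).trans ((bound d d).trans (by gcongr))
    have h4 : |α| * (|α| * q) ≤ |α| * (B * q * ‖d‖) := by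
      have : |α| * |α| = α * α := abs_mul_abs_self α
      rw [hBq, ← mul_assoc, this]
      linarith
    have h5 : |α| ≤ B * ‖d‖ := by
      have := le_of_mul_le_mul_left h4 hαpos
      refine le_of_mul_le_mul_right ?_ hv
      linarith
    linarith [norm_nonneg d]
  calc ‖α • v + d‖ ≤ |α| * ‖v‖ + ‖d‖ := by
        simpa [norm_smul] using norm_add_le (α • v) d
    _ ≤ (B + 1) * ‖d‖ * ‖v‖ + ‖d‖ := by gcongr
    _ = _ := by ring

/-- A vector that is far from the line `ℝ v` and nearly orthogonal to `g ⟂ v` is controlled by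
its component orthogonal to both `v` and `g`. -/
theorem norm_le_mul_norm_orthogonalProjectionOnto [FiniteDimensional ℝ E] {v g w : E}
    (hg : g ≠ 0) (hgv : ⟪g, v⟫ = 0) {C η : ℝ} (hC : 0 ≤ C) (hCη : 2 * C * η ≤ ‖g‖)
    (hw : ∀ α : ℝ, ‖w‖ ≤ C * ‖w - α • v‖)
    (hgw : |⟪g, w⟫| ≤ η * ‖w‖) :
    ‖w‖ ≤ 2 * C * ‖(Submodule.span ℝ {v, g})ᗮ.orthogonalProjectionOnto w‖ := by
  set p : (Submodule.span ℝ {v, g})ᗮ := (Submodule.span ℝ {v, g})ᗮ.orthogonalProjectionOnto w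
  have hmem : w - (p : E) ∈ Submodule.span ℝ {v, g} := by
    have := Submodule.sub_starProjection_mem_orthogonal (K := (Submodule.span ℝ {v, g})ᗮ) w
    rwa [Submodule.orthogonal_orthogonal] at this
  obtain ⟨α, β, hαβ⟩ := Submodule.mem_span_pair.1 hmem
  have hgp : ⟪g, (p : E)⟫ = 0 := p.2 g (Submodule.subset_span (by simp))
  have hw_eq : w = α • v + β • g + p := by rw [hαβ]; abel
  have hβ : ⟪g, w⟫ = β * ‖g‖ ^ 2 := by
    rw [hw_eq]
    simp [inner_add_right, inner_smul_right, hgv, hgp]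
  have hgpos : 0 < ‖g‖ := norm_pos_iff.2 hg
  have h1 : ‖w - α • v‖ ≤ |β| * ‖g‖ + ‖(p : E)‖ := by
    rw [show w - α • v = β • g + p by rw [hw_eq]; abel]
    simpa [norm_smul] using norm_add_le (β • g) (p : E)
  have h2 : |β| * ‖g‖ ^ 2 ≤ η * ‖w‖ := by
    rwa [hβ, abs_mul, abs_of_nonneg (sq_nonneg ‖g‖)] at hgw
  have h3 : ‖w‖ ≤ C * (|β| * ‖g‖ + ‖(p : E)‖) := (hw α).trans (by gcongr)
  refine le_of_mul_le_mul_left ?_ hgpos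
  change ‖g‖ * ‖w‖ ≤ ‖g‖ * (2 * C * ‖(p : E)‖)
  nlinarith [mul_le_mul_of_nonneg_left h3 hgpos.le, mul_le_mul_of_nonneg_left h2 hC,
    mul_le_mul_of_nonneg_right hCη (norm_nonneg w)]

/-- Along two bounded solutions that stay where `f` is close to its linearization `A`, the
difference lies in the nonpositive cone of a Lyapunov form of `A`. -/
theorem inner_sub_nonpos_of_bounded_solutions {f : E → E} {A X : E →L[ℝ] E} {μ : ℝ} (hμ : 0 < μ)
    (hX : ∀ w, ⟪A w, X w⟫ + ⟪w, X (A w)⟫ = μ * ⟪w, X w⟫ + ‖w‖ ^ 2)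
    {s : Set E} {c : ℝ≥0} (hs : ApproximatesLinearOn f A s c) (hc : 2 * ‖X‖ * c ≤ 1)
    {x y : ℝ → E} {T M : ℝ}
    (hx : ∀ t, T ≤ t → HasDerivWithinAt x (f (x t)) (Ici T) t)
    (hy : ∀ t, T ≤ t → HasDerivWithinAt y (f (y t)) (Ici T) t)
    (hxs : ∀ t, T ≤ t → x t ∈ s) (hys : ∀ t, T ≤ t → y t ∈ s)
    (hM : ∀ t, T ≤ t → ‖x t - y t‖ ≤ M) :
    ⟪x T - y T, X (x T - y T)⟫ ≤ 0 := by
  set w : ℝ → E := fun t => x t - y t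
  set F : ℝ → ℝ := fun t => Real.exp (-μ * t) * ⟪w t, X (w t)⟫
  set F' : ℝ → ℝ := fun t => Real.exp (-μ * t) *
    (⟪w t, X (f (x t) - f (y t))⟫ + ⟪f (x t) - f (y t), X (w t)⟫ - μ * ⟪w t, X (w t)⟫) with hF'_def
  have hF (t : ℝ) (ht : T ≤ t) : HasDerivWithinAt F (F' t) (Ici T) t := by
    have hw : HasDerivWithinAt w (f (x t) - f (y t)) (Ici T) t := (hx t ht).sub (hy t ht)
    have hXw : HasDerivWithinAt (fun t => X (w t)) (X (f (x t) - f (y t))) (Ici T) t :=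
      X.hasFDerivAt.comp_hasDerivWithinAt t hw
    have he : HasDerivWithinAt (fun t => Real.exp (-μ * t)) (Real.exp (-μ * t) * (-μ)) (Ici T) t :=
      ((hasDerivAt_id t).const_mul (-μ)).exp.hasDerivWithinAt.congr_deriv (by simp)
    refine (he.mul (hw.inner ℝ hXw)).congr_deriv ?_
    simp only [hF'_def]
    ring
  have hF'_nonneg (t : ℝ) (ht : T ≤ t) : 0 ≤ F' t := by
    refine mul_nonneg (Real.exp_pos _).le ?_
    obtain ⟨e, he⟩ : ∃ e, f (x t) - f (y t) = A (w t) + e := ⟨f (x t) - f (y t) - A (w t), by abel⟩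
    have hen : ‖e‖ ≤ c * ‖w t‖ := by
      have := hs _ (hxs t ht) _ (hys t ht)
      rwa [he, add_sub_cancel_left] at this
    have h1 : |⟪w t, X e⟫| ≤ ‖X‖ * c * ‖w t‖ ^ 2 :=
      calc |⟪w t, X e⟫| ≤ ‖w t‖ * ‖X e‖ := abs_real_inner_le_norm _ _
        _ ≤ ‖w t‖ * (‖X‖ * (c * ‖w t‖)) := by gcongr; exact X.le_opNorm_of_le hen
        _ = _ := by ring
    have h2 : |⟪e, X (w t)⟫| ≤ ‖X‖ * c * ‖w t‖ ^ 2 :=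
      calc |⟪e, X (w t)⟫| ≤ ‖e‖ * ‖X (w t)‖ := abs_real_inner_le_norm _ _
        _ ≤ (c * ‖w t‖) * (‖X‖ * ‖w t‖) := by gcongr; exact X.le_opNorm _
        _ = _ := by ring
    rw [he, map_add, inner_add_left, inner_add_right]
    nlinarith [hX (w t), neg_le_of_abs_le h1, neg_le_of_abs_le h2, sq_nonneg ‖w t‖]
  have hmono : MonotoneOn F (Ici T) :=
    monotoneOn_of_hasDerivWithinAt_nonneg (convex_Ici T)
      (fun t ht => (hF t ht).continuousWithinAt)
      (fun t ht => (hF t (interior_subset ht)).mono interior_subset)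
      (fun t ht => hF'_nonneg t (interior_subset ht))
  have hlim : Tendsto (fun t => Real.exp (-μ * t) * (‖X‖ * M ^ 2)) atTop (𝓝 0) := by
    have : Tendsto (fun t : ℝ => Real.exp (-μ * t)) atTop (𝓝 0) :=
      Real.tendsto_exp_atBot.comp (tendsto_id.const_mul_atTop_of_neg (neg_lt_zero.2 hμ))
    simpa using this.mul_const (‖X‖ * M ^ 2)
  have hle : F T ≤ 0 := by
    refine ge_of_tendsto hlim ?_
    filter_upwards [eventually_ge_atTop T] with t ht
    refine (hmono self_mem_Ici ht ht).trans ?_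
    refine mul_le_mul_of_nonneg_left ?_ (Real.exp_pos _).le
    calc ⟪w t, X (w t)⟫ ≤ ‖w t‖ * ‖X (w t)‖ := real_inner_le_norm _ _
      _ ≤ ‖w t‖ * (‖X‖ * ‖w t‖) := by gcongr; exact X.le_opNorm _
      _ = ‖X‖ * ‖w t‖ ^ 2 := by ring
      _ ≤ ‖X‖ * M ^ 2 := by gcongr; exact hM t ht
  exact nonpos_of_mul_nonpos_right hle (Real.exp_pos _)

/-- Backward Grönwall estimate for two solutions of an autonomous Lipschitz system. -/
theorem dist_zero_le_of_solutions {f : E → E} {s : Set E} {K : ℝ≥0}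
    (hf : LipschitzOnWith K f s)
    {x y : ℝ → E} {T : ℝ} (hT : 0 ≤ T)
    (hx : ∀ t, 0 ≤ t → HasDerivWithinAt x (f (x t)) (Ici 0) t)
    (hy : ∀ t, 0 ≤ t → HasDerivWithinAt y (f (y t)) (Ici 0) t)
    (hxs : ∀ t, 0 ≤ t → x t ∈ s) (hys : ∀ t, 0 ≤ t → y t ∈ s) :
    dist (x 0) (y 0) ≤ dist (x T) (y T) * Real.exp (K * T) := by
  have hcont {z : ℝ → E} (hz : ∀ t, 0 ≤ t → HasDerivWithinAt z (f (z t)) (Ici 0) t) :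
      ContinuousOn (fun t => z (T - t)) (Icc 0 T) :=
    ContinuousOn.comp (t := Ici 0) (fun t ht => (hz t ht).continuousWithinAt) (by fun_prop)
      fun t ht => sub_nonneg.2 ht.2
  have hderiv {z : ℝ → E} (hz : ∀ t, 0 ≤ t → HasDerivWithinAt z (f (z t)) (Ici 0) t) :
      ∀ t ∈ Ico 0 T, HasDerivWithinAt (fun t => z (T - t)) (-f (z (T - t))) (Ici t) t := by
    intro t ht
    have hpos : 0 < T - t := sub_pos.2 ht.2
    have hzt : HasDerivAt z (f (z (T - t))) (T - t) :=
      (hz _ hpos.le).hasDerivAt (Ici_mem_nhds hpos)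
    simpa [Function.comp_def] using
      (hzt.scomp t ((hasDerivAt_id t).const_sub T)).hasDerivWithinAt
  have hmem {z : ℝ → E} (hz : ∀ t, 0 ≤ t → z t ∈ s) : ∀ t ∈ Ico 0 T, z (T - t) ∈ s :=
    fun t ht => hz _ (sub_nonneg.2 ht.2.le)
  have := dist_le_of_trajectories_ODE_of_mem (v := fun _ z => -f z) (s := fun _ => s)
    (fun t _ => hf.neg) (hcont hx) (hderiv hx) (hmem hxs) (hcont hy) (hderiv hy) (hmem hys)
    le_rfl T (right_mem_Icc.2 hT)
  simpa using this

theorem finrank_orthogonal_span_pair [FiniteDimensional ℝ E] {v g : E} (hv : v ≠ 0) (hg : g ≠ 0)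
    (hgv : ⟪g, v⟫ = 0) : finrank ℝ (Submodule.span ℝ {v, g})ᗮ + 2 = finrank ℝ E := by
  have hli : LinearIndependent ℝ ![v, g] := by
    refine linearIndependent_of_ne_zero_of_inner_eq_zero (𝕜 := ℝ) ?_ ?_
    · intro i; fin_cases i <;> simpa
    · intro i j hij
      fin_cases i <;> fin_cases j <;> simp_all [real_inner_comm]
  have h2 := finrank_span_eq_card hli
  rw [Matrix.range_cons_cons_empty, Fintype.card_fin] at h2
  have := (Submodule.span ℝ {v, g}).finrank_add_finrank_orthogonal
  omega

/-- The set of initial points of solutions on `{h = 0}` converging to an equilibrium `a` with an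
unstable eigendirection tangent to `{h = 0}` has codimension at least one in `{h = 0}`. -/
theorem dimH_stable_set_le [FiniteDimensional ℝ E] {f : E → E} (hf : ContDiff ℝ 1 f) {h : E → ℝ}
    (hh : ContDiff ℝ 1 h) {a v : E} (hg : gradient h a ≠ 0) (hv : v ≠ 0)
    (hgv : ⟪gradient h a, v⟫ = 0) {lam : ℝ} (hlam : 0 < lam) (hA : fderiv ℝ f a v = lam • v) :
    dimH {x₀ : E | ∃ x : ℝ → E,
      (∀ t : ℝ, 0 ≤ t → HasDerivWithinAt x (f (x t)) (Ici 0) t ∧ h (x t) = 0) ∧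
        x 0 = x₀ ∧ Tendsto x atTop (𝓝 a)} ≤
      finrank ℝ (Submodule.span ℝ {v, gradient h a})ᗮ := by
  set A := fderiv ℝ f a
  set g := gradient h a with hg_def
  obtain ⟨μ, ⟨hμ, hμlam⟩, X, hX⟩ := exists_lyapunov_form A (b := 2 * lam) (by positivity)
  have hqv : 0 < ⟪v, X v⟫ := by
    have h1 := hX v
    simp only [hA, map_smul, inner_smul_left, inner_smul_right, RCLike.conj_to_real] at h1
    have h2 : 0 < ‖v‖ ^ 2 := by positivity
    have h3 : 0 < (2 * lam - μ) * ⟪v, X v⟫ := by linarith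
    exact pos_of_mul_pos_right h3 (by linarith)
  obtain ⟨C, hC, hCX⟩ := exists_norm_le_mul_norm_sub_smul X hqv
  have exists_small (B m : ℝ) (hB : 0 ≤ B) (hm : 0 < m) : ∃ c : ℝ≥0, 0 < c ∧ B * c ≤ m := by
    refine ⟨⟨m / (B + 1), by positivity⟩, ?_, ?_⟩
    · change 0 < m / (B + 1)
      positivity
    · change B * (m / (B + 1)) ≤ m
      rw [← mul_div_assoc, div_le_iff₀ (by positivity)]
      nlinarith
  obtain ⟨c, hc, hcX⟩ := exists_small (2 * ‖X‖) 1 (by positivity) one_pos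
  obtain ⟨η, hη, hηC⟩ := exists_small (2 * C) ‖g‖ (by positivity) (norm_pos_iff.2 hg)
  obtain ⟨s, hs, hsf⟩ := (hf.hasStrictFDerivAt one_ne_zero).approximates_deriv_on_nhds
    (a := a) (.inr hc)
  obtain ⟨u, hu, huh⟩ := (hh.hasStrictFDerivAt one_ne_zero).approximates_deriv_on_nhds
    (a := a) (.inr hη)
  let W (T R : ℕ) : Set E := {x₀ : E | ∃ x : ℝ → E,
    (∀ t : ℝ, 0 ≤ t → HasDerivWithinAt x (f (x t)) (Ici 0) t ∧ h (x t) = 0) ∧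
      x 0 = x₀ ∧ (∀ t : ℝ, T ≤ t → x t ∈ s ∩ u) ∧ ∀ t : ℝ, 0 ≤ t → x t ∈ Metric.closedBall 0 R}
  have hW (T R : ℕ) : dimH (W T R) ≤ finrank ℝ (Submodule.span ℝ {v, g})ᗮ := by
    obtain ⟨K, hK⟩ := hf.contDiffOn.exists_lipschitzOnWith one_ne_zero
      (convex_closedBall (0 : E) R) (isCompact_closedBall _ _)
    choose x hx hx0 hxs hxR using fun x₀ : W T R => x₀.2
    let Φ (x₀ : W T R) : (Submodule.span ℝ {v, g})ᗮ :=
      (Submodule.span ℝ {v, g})ᗮ.orthogonalProjectionOnto (x x₀ T)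
    have hT : (0 : ℝ) ≤ T := T.cast_nonneg
    have hanti : AntilipschitzWith (Real.toNNReal (2 * C * Real.exp (K * T))) Φ := by
      refine AntilipschitzWith.of_le_mul_dist fun y z => ?_
      rw [Real.coe_toNNReal _ (by positivity), Subtype.dist_eq, ← hx0 y, ← hx0 z]
      have hneg : ⟪x y T - x z T, X (x y T - x z T)⟫ ≤ 0 := by
        refine inner_sub_nonpos_of_bounded_solutions (M := R + R) hμ hX hsf hcX
          (fun t ht => ((hx y t (hT.trans ht)).1).mono (Ici_subset_Ici.2 hT))
          (fun t ht => ((hx z t (hT.trans ht)).1).mono (Ici_subset_Ici.2 hT))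
          (fun t ht => (hxs y t ht).1) (fun t ht => (hxs z t ht).1) fun t ht => ?_
        have h1 := hxR y t (hT.trans ht)
        have h2 := hxR z t (hT.trans ht)
        rw [mem_closedBall_zero_iff] at h1 h2
        exact (norm_sub_le _ _).trans (add_le_add h1 h2)
      have htan : |⟪g, x y T - x z T⟫| ≤ η * ‖x y T - x z T‖ := by
        have := huh _ (hxs y T le_rfl).2 _ (hxs z T le_rfl).2
        rw [(hx y T hT).2, (hx z T hT).2, sub_zero, zero_sub, norm_neg] at this
        rwa [hg_def, inner_gradient_left]
      have hproj := norm_le_mul_norm_orthogonalProjectionOnto hg hgv hC hηC (hCX _ hneg) htan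
      calc dist (x y 0) (x z 0) ≤ dist (x y T) (x z T) * Real.exp (K * T) :=
            dist_zero_le_of_solutions hK hT (fun t ht => (hx y t ht).1)
              (fun t ht => (hx z t ht).1) (hxR y) (hxR z)
        _ ≤ (2 * C * dist (Φ y) (Φ z)) * Real.exp (K * T) := by
            gcongr
            rwa [dist_eq_norm, dist_eq_norm, ← map_sub]
        _ = _ := by ring
    calc dimH (W T R) = dimH (univ : Set (W T R)) := by
          have := (isometry_subtype_coe (s := W T R)).dimH_image univ
          rwa [image_univ, Subtype.range_coe] at this
      _ ≤ dimH (Φ '' univ) := hanti.le_dimH_image _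
      _ ≤ dimH (univ : Set (Submodule.span ℝ {v, g})ᗮ) := dimH_mono (subset_univ _)
      _ = _ := Real.dimH_univ_eq_finrank _
  calc _ ≤ dimH (⋃ T : ℕ, ⋃ R : ℕ, W T R) := by
        refine dimH_mono ?_
        rintro x₀ ⟨x, hx, hx0, hlim⟩
        obtain ⟨T, hT⟩ := eventually_atTop.1 (hlim (inter_mem hs hu))
        obtain ⟨N, hN⟩ := exists_nat_ge T
        obtain ⟨S, hS⟩ := eventually_atTop.1 (hlim (Metric.ball_mem_nhds a one_pos))
        have hcont : ContinuousOn x (Icc 0 S) := fun t ht =>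
          (hx t ht.1).1.continuousWithinAt.mono Icc_subset_Ici_self
        obtain ⟨r, hr⟩ := ((isCompact_Icc.image_of_continuousOn hcont).isBounded.union
          (Metric.isBounded_ball (x := a) (r := 1))).subset_closedBall 0
        obtain ⟨R, hR⟩ := exists_nat_ge r
        refine mem_iUnion₂.2 ⟨N, R, x, hx, hx0, fun t ht => hT t (hN.trans ht), fun t ht => ?_⟩
        refine Metric.closedBall_subset_closedBall hR (hr ?_)
        rcases le_total t S with htS | htS
        · exact .inl ⟨t, ⟨ht, htS⟩, rfl⟩
        · exact .inr (hS t htS)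
    _ ≤ _ := by
        rw [dimH_iUnion]
        refine iSup_le fun T => ?_
        rw [dimH_iUnion]
        exact iSup_le (hW T)

end StableSet

/- `xs j`, `j : Fin k`, enumerates the equilibria `x₂*, …, x_k*`. -/
theorem stmt_2 (n k : ℕ)
    (f : EuclideanSpace ℝ (Fin n) → EuclideanSpace ℝ (Fin n)) (hf : ContDiff ℝ 1 f)
    (h : EuclideanSpace ℝ (Fin n) → ℝ) (hh : ContDiff ℝ 1 h)
    (hgrad_ne : ∀ x, h x = 0 → gradient h x ≠ 0)
    (xs : Fin k → EuclideanSpace ℝ (Fin n))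
    (hxsH : ∀ j, h (xs j) = 0)
    (hxs_eq : ∀ j, f (xs j) = 0)
    -- each equilibrium has an unstable eigendirection tangent to `H`
    (hunstable : ∀ j : Fin k,
      ∃ v : EuclideanSpace ℝ (Fin n), v ≠ 0 ∧ ⟪gradient h (xs j), v⟫ = 0 ∧
        ∃ lam : ℝ, 0 < lam ∧ fderiv ℝ f (xs j) v = lam • v) :
    MeasureTheory.Measure.hausdorffMeasure ((n : ℝ) - 1)
      {x₀ : EuclideanSpace ℝ (Fin n) | h x₀ = 0 ∧
        ∃ j : Fin k, ∃ x : ℝ → EuclideanSpace ℝ (Fin n),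
          IsGlobalSolutionOn f h x ∧ x 0 = x₀ ∧
          Filter.Tendsto x Filter.atTop (nhds (xs j))} = 0 := by
  have hsub : {x₀ : EuclideanSpace ℝ (Fin n) | h x₀ = 0 ∧
      ∃ j : Fin k, ∃ x : ℝ → EuclideanSpace ℝ (Fin n),
        IsGlobalSolutionOn f h x ∧ x 0 = x₀ ∧ Tendsto x atTop (𝓝 (xs j))} ⊆
      ⋃ j : Fin k, {x₀ | ∃ x : ℝ → EuclideanSpace ℝ (Fin n),
        IsGlobalSolutionOn f h x ∧ x 0 = x₀ ∧ Tendsto x atTop (𝓝 (xs j))} := by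
    rintro x₀ ⟨-, j, hx⟩
    exact mem_iUnion.2 ⟨j, hx⟩
  refine MeasureTheory.measure_mono_null hsub (MeasureTheory.measure_iUnion_null fun j => ?_)
  obtain ⟨v, hv, hgv, lam, hlam, hA⟩ := hunstable j
  have hg := hgrad_ne _ (hxsH j)
  have hdim := dimH_stable_set_le hf hh hg hv hgv hlam hA
  have hfin := finrank_orthogonal_span_pair hv hg hgv
  rw [finrank_euclideanSpace_fin] at hfin
  have hcast : (n : ℝ) - 1 = ((n - 1 : ℕ) : ℝ≥0) := by
    rw [NNReal.coe_natCast, Nat.cast_sub (by omega), Nat.cast_one]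
  rw [hcast]
  refine hausdorffMeasure_of_dimH_lt (hdim.trans_lt ?_)
  rw [ENNReal.coe_natCast, Nat.cast_lt]
  omega
end

section
/- Let X be a nonempty metric space and let φ : [0,∞) × X → X be continuous with φ(0, x) = x for all x and φ(t + s, x) = φ(t, φ(s, x)) for all t, s ≥ 0 and x ∈ X. Suppose x* ∈ X satisfies: φ(t, x*) = x* for all t ≥ 0; x* is Lyapunov stable (for every ε > 0 there exists δ > 0 such that d(x, x*) < δ implies d(φ(t, x), x*) < ε for all t ≥ 0); and x* is globally attractive (for every x ∈ X, φ(t, x) → x* as t → ∞). Then X is contractible. -/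
open Filter Topology unitInterval

/-- A stable, pointwise attractive point of a continuous semiflow attracts locally uniformly. -/
theorem tendsto_atTop_prod_nhds_of_stable {X : Type*} [PseudoMetricSpace X] {φ : ℝ → X → X}
    (hcont : ∀ t, 0 ≤ t → Continuous (φ t))
    (hsemigroup : ∀ t s : ℝ, 0 ≤ t → 0 ≤ s → ∀ x : X, φ (t + s) x = φ t (φ s x))
    {xstar : X}
    (hstable : ∀ ε > 0, ∃ δ > 0, ∀ x : X, dist x xstar < δ →
      ∀ t : ℝ, 0 ≤ t → dist (φ t x) xstar < ε)
    (hattract : ∀ x : X, Tendsto (fun t : ℝ => φ t x) atTop (𝓝 xstar)) (x₀ : X) :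
    Tendsto (fun p : ℝ × X => φ p.1 p.2) (atTop ×ˢ 𝓝 x₀) (𝓝 xstar) := by
  rw [Metric.tendsto_nhds]
  intro ε hε
  obtain ⟨δ, hδ, hball⟩ := hstable ε hε
  obtain ⟨T, hT, hT0⟩ :=
    ((Metric.tendsto_nhds.1 (hattract x₀) δ hδ).and (eventually_ge_atTop 0)).exists
  have hnear : ∀ᶠ x in 𝓝 x₀, dist (φ T x) xstar < δ :=
    ((hcont T hT0).dist continuous_const).continuousAt.eventually_lt continuousAt_const hT
  filter_upwards [(eventually_ge_atTop T).prod_mk hnear] with p hp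
  have h := hball _ hp.2 (p.1 - T) (sub_nonneg.2 hp.1)
  rwa [← hsemigroup _ _ (sub_nonneg.2 hp.1) hT0, sub_add_cancel] at h

/-- The time change `s ↦ s / (1 - s)` sends `s → 1⁻` to `+∞`. -/
theorem tendsto_div_one_sub_atTop : Tendsto (fun s : ℝ => s / (1 - s)) (𝓝[<] 1) atTop := by
  have hsub : Tendsto (fun s : ℝ => 1 - s) (𝓝[<] 1) (𝓝[>] 0) := by
    refine tendsto_nhdsWithin_iff.2 ⟨?_, ?_⟩
    · exact ((continuous_const.sub continuous_id).tendsto' 1 0 (sub_self 1)).mono_left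
        nhdsWithin_le_nhds
    · filter_upwards [self_mem_nhdsWithin] with s hs using sub_pos.2 (Set.mem_Iio.1 hs)
  simpa only [div_eq_mul_inv, id, Function.comp_apply] using
    (tendsto_id.mono_left nhdsWithin_le_nhds : Tendsto id (𝓝[<] (1 : ℝ)) (𝓝 1)).pos_mul_atTop
      one_pos (tendsto_inv_nhdsGT_zero.comp hsub)

open scoped Classical in
/-- Following the semiflow for time `s / (1 - s)`, and jumping to `xstar` at `s = 1`,
is continuous. -/
theorem continuous_ite_semiflow {X : Type*} [TopologicalSpace X] {φ : ℝ → X → X}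
    (hcont : ContinuousOn (fun p : ℝ × X => φ p.1 p.2) (Set.Ici 0 ×ˢ Set.univ)) {xstar : X}
    (hlim : ∀ x₀ : X, Tendsto (fun p : ℝ × X => φ p.1 p.2) (atTop ×ˢ 𝓝 x₀) (𝓝 xstar)) :
    Continuous fun p : I × X =>
      if p.1 = 1 then xstar else φ ((p.1 : ℝ) / (1 - p.1)) p.2 := by
  rw [continuous_iff_continuousAt]
  rintro ⟨s, x₀⟩
  by_cases hs : s = 1
  · subst hs
    rw [ContinuousAt, if_pos rfl]
    refine Tendsto.if tendsto_const_nhds ?_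
    have htime : Tendsto (fun p : I × X => (p.1 : ℝ))
        (𝓝 (1, x₀) ⊓ 𝓟 {p | ¬ p.1 = 1}) (𝓝[<] 1) := by
      refine tendsto_nhdsWithin_iff.2 ⟨?_, ?_⟩
      · exact ((continuous_subtype_val.comp continuous_fst).tendsto' _ _ rfl).mono_left inf_le_left
      · refine mem_inf_of_right fun p hp => ?_
        exact unitInterval.lt_one_iff_ne_one.2 hp
    exact (hlim x₀).comp ((tendsto_div_one_sub_atTop.comp htime).prodMk
      ((continuous_snd.tendsto' _ _ rfl).mono_left inf_le_left))
  · have hopen : IsOpen {p : I × X | p.1 ≠ 1} := isOpen_ne.preimage continuous_fst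
    have hon : ContinuousOn (fun p : I × X => φ ((p.1 : ℝ) / (1 - p.1)) p.2)
        {p | p.1 ≠ 1} := by
      refine hcont.comp (f := fun p : I × X => ((p.1 : ℝ) / (1 - p.1), p.2)) ?_ ?_
      · refine ContinuousOn.prodMk (ContinuousOn.div (by fun_prop) (by fun_prop) ?_) (by fun_prop)
        intro p hp
        exact sub_ne_zero.2 fun h => hp (Subtype.ext h.symm)
      · exact fun p _ => ⟨div_nonneg p.1.2.1 (sub_nonneg.2 p.1.2.2), trivial⟩
    refine (hon.continuousAt (hopen.mem_nhds hs)).congr ?_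
    filter_upwards [hopen.mem_nhds (show (s, x₀) ∈ {p : I × X | p.1 ≠ 1} from hs)] with p hp
    exact (if_neg hp).symm

/-- If a continuous semiflow on a nonempty metric space has a Lyapunov-stable,
globally attractive equilibrium, then the space is contractible. -/
theorem stmt_3 (X : Type*) [MetricSpace X] [Nonempty X]
    (φ : ℝ → X → X)
    (hcont : ContinuousOn (fun p : ℝ × X => φ p.1 p.2) (Set.Ici 0 ×ˢ Set.univ))
    (hid : ∀ x : X, φ 0 x = x)
    (hsemigroup : ∀ t s : ℝ, 0 ≤ t → 0 ≤ s → ∀ x : X, φ (t + s) x = φ t (φ s x))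
    (xstar : X)
    (heq : ∀ t : ℝ, 0 ≤ t → φ t xstar = xstar)
    (hstable : ∀ ε > 0, ∃ δ > 0, ∀ x : X, dist x xstar < δ →
      ∀ t : ℝ, 0 ≤ t → dist (φ t x) xstar < ε)
    (hattract : ∀ x : X,
      Filter.Tendsto (fun t : ℝ => φ t x) Filter.atTop (nhds xstar)) :
    ContractibleSpace X := by
  classical
  have hmap : ∀ t, 0 ≤ t → Continuous (φ t) := fun t ht =>
    hcont.comp_continuous (f := fun x => (t, x)) (by fun_prop) fun _ => ⟨ht, trivial⟩
  rw [contractible_iff_id_nullhomotopic]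
  exact ⟨xstar, ⟨{
    toFun := fun p => if p.1 = 1 then xstar else φ ((p.1 : ℝ) / (1 - p.1)) p.2
    continuous_toFun := by
      convert continuous_ite_semiflow hcont
        (tendsto_atTop_prod_nhds_of_stable hmap hsemigroup hstable hattract)
    map_zero_left := fun x => by simp [hid]
    map_one_left := fun x => by simp }⟩⟩
end

section
/- Let n, d ∈ ℕ and let p be a polynomial in n real variables. Let M denote the (finite) set of exponent multi-indices α : {1,…,n} → ℕ with |α| = α₁ + ⋯ + αₙ ≤ d. Then the following are equivalent: (i) there exist m ∈ ℕ and polynomials p₁, …, p_m, each of total degree at most d, such that p = Σ_{i=1}^{m} pᵢ²; (ii) there exists a symmetric positive semidefinite matrix Q indexed by M × M such that p = Σ_{α ∈ M} Σ_{β ∈ M} Q(α, β) · x^{α+β}, where x^{γ} denotes the monomial x₁^{γ₁} ⋯ xₙ^{γₙ}. -/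
open MvPolynomial in
/-- The square of a polynomial supported in `M` has the products of its coefficients as a Gram
matrix. -/
theorem MvPolynomial.sum_monomial_sq {σ R : Type*} [CommSemiring R] (M : Finset (σ →₀ ℕ))
    (c : (σ →₀ ℕ) → R) :
    (∑ α ∈ M, monomial α (c α)) ^ 2 = ∑ α ∈ M, ∑ β ∈ M, monomial (α + β) (c α * c β) := by
  simp only [sq, Finset.sum_mul_sum, monomial_mul]

/-- A real quadratic form on a finite set that is symmetric and nonnegative is a sum of squares
of linear forms. -/
theorem Finset.exists_sum_mul_of_quadratic_nonneg {ι : Type*} (M : Finset ι) (Q : ι → ι → ℝ)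
    (hsymm : ∀ α ∈ M, ∀ β ∈ M, Q α β = Q β α)
    (hpos : ∀ w : ι → ℝ, 0 ≤ ∑ α ∈ M, ∑ β ∈ M, w α * Q α β * w β) :
    ∃ (m : ℕ) (c : Fin m → ι → ℝ), ∀ α ∈ M, ∀ β ∈ M, Q α β = ∑ i, c i α * c i β := by
  classical
  have hQ : (Matrix.of fun α β : M => Q α β).PosSemidef := by
    refine Matrix.PosSemidef.of_dotProduct_mulVec_nonneg ?_ fun v => ?_
    · ext α β
      simpa using hsymm β β.2 α α.2
    · refine (hpos fun α => if h : α ∈ M then v ⟨α, h⟩ else 0).trans_eq ?_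
      simp [dotProduct, Matrix.mulVec, ← Finset.sum_coe_sort M, Finset.mul_sum, mul_assoc]
  obtain ⟨m, v, hv⟩ := Matrix.posSemidef_iff_eq_sum_vecMulVec.mp hQ
  refine ⟨m, fun i α => if h : α ∈ M then v i ⟨α, h⟩ else 0, fun α hα β hβ => ?_⟩
  simpa [Matrix.sum_apply, Matrix.vecMulVec_apply, hα, hβ] using
    congr_fun (congr_fun hv ⟨α, hα⟩) ⟨β, hβ⟩

/-- A polynomial is a sum of squares of polynomials of degree at most `d` iff it admits
a positive semidefinite Gram matrix representation indexed by the multi-indices of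
total degree at most `d`. -/
theorem stmt_4 (n d : ℕ) (p : MvPolynomial (Fin n) ℝ)
    (M : Finset (Fin n →₀ ℕ))
    (hM : ∀ α : Fin n →₀ ℕ, α ∈ M ↔ (α.sum fun _ e => e) ≤ d) :
    (∃ (m : ℕ) (ps : Fin m → MvPolynomial (Fin n) ℝ),
        (∀ i, (ps i).totalDegree ≤ d) ∧ p = ∑ i, (ps i) ^ 2) ↔
    (∃ Q : (Fin n →₀ ℕ) → (Fin n →₀ ℕ) → ℝ,
        (∀ α ∈ M, ∀ β ∈ M, Q α β = Q β α) ∧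
        (∀ w : (Fin n →₀ ℕ) → ℝ, 0 ≤ ∑ α ∈ M, ∑ β ∈ M, w α * Q α β * w β) ∧
        p = ∑ α ∈ M, ∑ β ∈ M, MvPolynomial.monomial (α + β) (Q α β)) := by
  have gram : ∀ (m : ℕ) (c : Fin m → (Fin n →₀ ℕ) → ℝ),
      ∑ i, (∑ α ∈ M, MvPolynomial.monomial α (c i α)) ^ 2 =
        ∑ α ∈ M, ∑ β ∈ M, MvPolynomial.monomial (α + β) (∑ i, c i α * c i β) := by
    intro m c
    simp only [MvPolynomial.sum_monomial_sq, map_sum]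
    rw [Finset.sum_comm]
    exact Finset.sum_congr rfl fun α _ => Finset.sum_comm
  constructor
  · rintro ⟨m, ps, hdeg, rfl⟩
    refine ⟨fun α β => ∑ i, (ps i).coeff α * (ps i).coeff β, fun α _ β _ => ?_, fun w => ?_, ?_⟩
    · simp only [mul_comm]
    · have key : ∑ α ∈ M, ∑ β ∈ M, w α * (∑ i, (ps i).coeff α * (ps i).coeff β) * w β =
          ∑ i, (∑ α ∈ M, w α * (ps i).coeff α) ^ 2 := by
        simp only [sq, Finset.mul_sum, Finset.sum_mul]
        rw [Finset.sum_comm (s := Finset.univ)]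
        refine Finset.sum_congr rfl fun α _ => ?_
        rw [Finset.sum_comm]
        exact Finset.sum_congr rfl fun i _ => Finset.sum_congr rfl fun β _ => by ring
      rw [key]
      positivity
    · rw [← gram m fun i α => (ps i).coeff α]
      refine Finset.sum_congr rfl fun i _ => congrArg (· ^ 2) ?_
      conv_lhs => rw [(ps i).as_sum]
      refine Finset.sum_subset (fun α hα => ?_) fun α _ hα => ?_
      · exact (hM α).2 ((MvPolynomial.le_totalDegree hα).trans (hdeg i))
      · simp [MvPolynomial.notMem_support_iff.1 hα]
  · rintro ⟨Q, hsymm, hpos, rfl⟩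
    obtain ⟨m, c, hc⟩ := M.exists_sum_mul_of_quadratic_nonneg Q hsymm hpos
    refine ⟨m, fun i => ∑ α ∈ M, MvPolynomial.monomial α (c i α), fun i => ?_, ?_⟩
    · exact MvPolynomial.totalDegree_finsetSum_le fun α hα =>
        (MvPolynomial.totalDegree_monomial_le α _).trans ((hM α).1 hα)
    · rw [gram]
      exact Finset.sum_congr rfl fun α hα => Finset.sum_congr rfl fun β hβ => by rw [hc α hα β hβ]
end

section
/- Let f : ℝⁿ → ℝⁿ be continuous, h : ℝⁿ → ℝ continuous, and H = {x ∈ ℝⁿ : h(x) = 0} with 0 ∈ H. Let E = {x₁*, …, x_k*} ⊆ H be a finite set of pairwise distinct points with x₁* = 0 and f(xᵢ*) = 0 for all i. Suppose V : ℝⁿ → ℝ is continuously differentiable with V(0) = 0, V(x) > 0 for every x ∈ H with x ≠ 0, V radially unbounded on H (for every M > 0 there is R > 0 such that x ∈ H and ‖x‖ > R imply V(x) > M), and there exists ε > 0 with ⟨∇V(x), f(x)⟩ ≤ −ε · ∏_{i=1}^{k} ‖x − xᵢ*‖² for all x ∈ H. Then every global solution on H converges to E: for every δ > 0 there exists T ≥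 0 such that min_{1 ≤ i ≤ k} ‖x(t) − xᵢ*‖ < δ for all t ≥ T. -/
open scoped RealInnerProductSpace

/-- A function on `[0, ∞)` whose derivative is at most `C` on `[a, b]` grows by at most
`C * (b - a)`. -/
theorem sub_le_mul_sub_of_hasDerivWithinAt_Ici {g g' : ℝ → ℝ}
    (hg : ∀ t, 0 ≤ t → HasDerivWithinAt g (g' t) (Set.Ici 0) t)
    {a b C : ℝ} (ha : 0 ≤ a) (hab : a ≤ b) (hC : ∀ t ∈ Set.Icc a b, g' t ≤ C) :
    g b - g a ≤ C * (b - a) := by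
  have hderiv : ∀ t ∈ interior (Set.Icc a b), HasDerivAt g (g' t) t := by
    intro t ht
    rw [interior_Icc] at ht
    have ht0 : 0 < t := ha.trans_lt ht.1
    exact (hg t ht0.le).hasDerivAt (Ici_mem_nhds ht0)
  refine (convex_Icc a b).image_sub_le_mul_sub_of_deriv_le ?_ ?_ ?_ a
    (Set.left_mem_Icc.2 hab) b (Set.right_mem_Icc.2 hab) hab
  · intro t ht
    exact (hg t (ha.trans ht.1)).continuousWithinAt.mono fun s hs => ha.trans hs.1
  · exact fun t ht => (hderiv t ht).differentiableAt.differentiableWithinAt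
  · intro t ht
    rw [(hderiv t ht).deriv]
    exact hC t (interior_subset ht)

/-- A function on `[0, ∞)` that is bounded below and nonincreasing eventually stops dropping by
any fixed positive amount. -/
theorem exists_forall_sub_lt_of_antitoneOn_Ici {g : ℝ → ℝ} {m d : ℝ}
    (hanti : AntitoneOn g (Set.Ici 0)) (hm : ∀ t, 0 ≤ t → m ≤ g t) (hd : 0 < d) :
    ∃ T, 0 ≤ T ∧ ∀ t ≥ T, ∀ s, 0 ≤ s → g t - d < g s := by
  have hbdd : BddBelow (g '' Set.Ici 0) := ⟨m, by rintro _ ⟨t, ht, rfl⟩; exact hm t ht⟩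
  have hne : (g '' Set.Ici 0).Nonempty := ⟨g 0, 0, Set.self_mem_Ici, rfl⟩
  obtain ⟨_, ⟨T, hT, rfl⟩, hlt⟩ := Real.lt_sInf_add_pos hne hd
  refine ⟨T, hT, fun t ht s hs => ?_⟩
  have hle : sInf (g '' Set.Ici 0) ≤ g s := csInf_le hbdd ⟨s, hs, rfl⟩
  have hgt : g t ≤ g T := hanti hT (le_trans hT ht) ht
  linarith

/-- Along a global solution, `V` has derivative `⟪∇V, f⟫`. -/
theorem IsGlobalSolutionOn.hasDerivWithinAt_comp_s7 {n : ℕ}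
    {f : EuclideanSpace ℝ (Fin n) → EuclideanSpace ℝ (Fin n)}
    {h : EuclideanSpace ℝ (Fin n) → ℝ} {x : ℝ → EuclideanSpace ℝ (Fin n)}
    (hx : IsGlobalSolutionOn f h x) {V : EuclideanSpace ℝ (Fin n) → ℝ}
    (hV : Differentiable ℝ V) {t : ℝ} (ht : 0 ≤ t) :
    HasDerivWithinAt (fun s => V (x s)) ⟪gradient V (x t), f (x t)⟫ (Set.Ici 0) t := by
  have hinner : ⟪gradient V (x t), f (x t)⟫ = fderiv ℝ V (x t) (f (x t)) := by simp
  rw [hinner]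
  exact (hV (x t)).hasFDerivAt.comp_hasDerivWithinAt t (hx t ht).1

theorem stmt_7 (n k : ℕ) (hk : 0 < k)
    (f : EuclideanSpace ℝ (Fin n) → EuclideanSpace ℝ (Fin n)) (hf : Continuous f)
    (h : EuclideanSpace ℝ (Fin n) → ℝ) (hh : Continuous h)
    (h0 : h 0 = 0)
    (xs : Fin k → EuclideanSpace ℝ (Fin n))
    (hxs0 : xs ⟨0, hk⟩ = 0)
    (hxsH : ∀ i, h (xs i) = 0)
    (hxs_distinct : Function.Injective xs)
    (hxs_eq : ∀ i, f (xs i) = 0)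
    (V : EuclideanSpace ℝ (Fin n) → ℝ) (hV : ContDiff ℝ 1 V)
    (hV0 : V 0 = 0)
    (hVpos : ∀ x, h x = 0 → x ≠ 0 → 0 < V x)
    (hVrad : ∀ M > 0, ∃ R > 0, ∀ x, h x = 0 → R < ‖x‖ → M < V x)
    (ε : ℝ) (hε : 0 < ε)
    (hVdot : ∀ x, h x = 0 →
      ⟪gradient V x, f x⟫ ≤ -ε * ∏ i : Fin k, ‖x - xs i‖ ^ 2) :
    ∀ x : ℝ → EuclideanSpace ℝ (Fin n), IsGlobalSolutionOn f h x →
      ∀ δ > 0, ∃ T : ℝ, 0 ≤ T ∧ ∀ t ≥ T, ∃ i : Fin k, ‖x t - xs i‖ < δ := by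
  intro x hx δ hδ
  have hVx := fun t (ht : 0 ≤ t) =>
    hx.hasDerivWithinAt_comp_s7 (hV.differentiable one_ne_zero) ht
  have hVnonneg : ∀ t, 0 ≤ t → 0 ≤ V (x t) := by
    intro t ht
    by_cases hxt : x t = 0
    · rw [hxt, hV0]
    · exact (hVpos _ (hx t ht).2 hxt).le
  have hanti : AntitoneOn (fun t => V (x t)) (Set.Ici 0) := by
    intro a ha b _ hab
    have hdrop := sub_le_mul_sub_of_hasDerivWithinAt_Ici hVx ha hab (C := 0) fun t ht => by
      have hdot := hVdot (x t) (hx t (le_trans ha ht.1)).2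
      have hprod : 0 ≤ ε * ∏ i : Fin k, ‖x t - xs i‖ ^ 2 := by positivity
      linarith
    simp only at hdrop ⊢
    linarith
  obtain ⟨R, -, hR⟩ := hVrad (V (x 0) + 1) (by linarith [hVnonneg 0 le_rfl])
  have hxR : ∀ t, 0 ≤ t → x t ∈ Metric.closedBall (0 : EuclideanSpace ℝ (Fin n)) R := by
    intro t ht
    rw [mem_closedBall_zero_iff]
    by_contra! hlt
    have hgt := hR (x t) (hx t ht).2 hlt
    have hle : V (x t) ≤ V (x 0) := hanti Set.self_mem_Ici ht ht
    linarith
  obtain ⟨B, hB⟩ := (isCompact_closedBall (0 : EuclideanSpace ℝ (Fin n))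
    R).exists_bound_of_continuousOn hf.continuousOn
  have hBpos : 0 < B + 1 := by linarith [norm_nonneg (f (x 0)), hB _ (hxR 0 le_rfl)]
  have hlip : ∀ a b, 0 ≤ a → 0 ≤ b → ‖x b - x a‖ ≤ (B + 1) * ‖b - a‖ := fun a b ha hb =>
    (convex_Ici (0 : ℝ)).norm_image_sub_le_of_norm_hasDerivWithin_le
      (fun t ht => (hx t ht).1) (fun t ht => (hB _ (hxR t ht)).trans (by linarith)) ha hb
  -- Starting at distance `≥ δ` from every equilibrium, the solution stays at distance `≥ δ / 2`
  -- for a time `τ`, during which `V` drops by at least `ε * c * τ`.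
  set τ : ℝ := δ / (2 * (B + 1))
  set c : ℝ := ∏ _i : Fin k, (δ / 2) ^ 2
  have hτ : 0 < τ := by positivity
  have hc : 0 < c := by positivity
  obtain ⟨T, hT, hdrop⟩ := exists_forall_sub_lt_of_antitoneOn_Ici hanti hVnonneg
    (show 0 < ε * c * τ by positivity)
  refine ⟨T, hT, fun t ht => ?_⟩
  by_contra! hfar
  have ht0 : 0 ≤ t := hT.trans ht
  have hstep := sub_le_mul_sub_of_hasDerivWithinAt_Ici hVx ht0
    (le_add_of_nonneg_right hτ.le) (C := -(ε * c)) fun s hs => by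
      have hs0 : 0 ≤ s := ht0.trans hs.1
      have hmove : ‖x s - x t‖ ≤ δ / 2 := calc
        ‖x s - x t‖ ≤ (B + 1) * ‖s - t‖ := hlip t s ht0 hs0
        _ ≤ (B + 1) * τ := by
          rw [Real.norm_of_nonneg (sub_nonneg.2 hs.1)]
          gcongr
          linarith [hs.2]
        _ = δ / 2 := by simp only [τ]; field_simp
      have hcle : c ≤ ∏ i : Fin k, ‖x s - xs i‖ ^ 2 := by
        refine Finset.prod_le_prod (fun i _ => by positivity) fun i _ => ?_
        gcongr
        have htri := norm_sub_le_norm_sub_add_norm_sub (x t) (x s) (xs i)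
        rw [norm_sub_rev (x t) (x s)] at htri
        linarith [hfar i]
      have hdot := hVdot (x s) (hx s hs0).2
      have hmul := mul_le_mul_of_nonneg_left hcle hε.le
      linarith
  have hlt := hdrop t ht (t + τ) (by linarith)
  simp only [add_sub_cancel_left] at hstep hlt
  linarith
end

section
/- Define f : ℝ⁶ → ℝ⁶ by f₁(x) = −0.05·x₃x₅ + 0.05·x₂x₆; f₂(x) = −0.05·x₆ + 0.05·x₃x₄ − 0.05·x₁x₆; f₃(x) = 0.05·x₅ − 0.05·x₂x₄ + 0.05·x₁x₅; f₄(x) = −0.016·x₄; f₅(x) = −0.00226·x₃ − 0.016·x₅ + 0.0133·x₄x₆ − 0.00807·x₂²x₃ − 0.00799·x₃³ + 0.00389·x₂⁴x₃ + 0.00389·x₃⁵; f₆(x) = 0.00226·x₂ − 0.016·x₆ − 0.0133·x₄x₅ + 0.00799·x₂³ + 0.00807·x₂x₃² − 0.00389·x₂⁵ − 0.00389·x₂x₃⁴, and h : ℝ⁶ → ℝ by h(x) = 2x₁ + x₁² + x₂² + x₃². Then {x ∈ ℝ⁶ : h(x) = 0 and f(x) = 0} = {(0,0,0,0,0,0),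 (−2,0,0,0,0,0)}; that is, the closed-loop system has exactly two equilibrium points on the constraint manifold H = {x : h(x) = 0}. -/
/-- The transformed closed-loop aerostability dynamics of Example 1. -/
def aeroF (x : Fin 6 → ℝ) : Fin 6 → ℝ :=
  ![-0.05 * (x 2 * x 4) + 0.05 * (x 1 * x 5),
    -0.05 * x 5 + 0.05 * (x 2 * x 3) - 0.05 * (x 0 * x 5),
    0.05 * x 4 - 0.05 * (x 1 * x 3) + 0.05 * (x 0 * x 4),
    -0.016 * x 3,
    -0.00226 * x 2 - 0.016 * x 4 + 0.0133 * (x 3 * x 5) - 0.00807 * (x 1 ^ 2 * x 2)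
      - 0.00799 * x 2 ^ 3 + 0.00389 * (x 1 ^ 4 * x 2) + 0.00389 * x 2 ^ 5,
    0.00226 * x 1 - 0.016 * x 5 - 0.0133 * (x 3 * x 4) + 0.00799 * x 1 ^ 3
      + 0.00807 * (x 1 * x 2 ^ 2) - 0.00389 * x 1 ^ 5 - 0.00389 * (x 1 * x 2 ^ 4)]

/-- The unit-norm constraint in shifted coordinates. -/
def aeroH (x : Fin 6 → ℝ) : ℝ := 2 * x 0 + x 0 ^ 2 + x 1 ^ 2 + x 2 ^ 2

/-- On the unit disc the aerodynamic stiffness coefficient is positive. -/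
theorem aero_stiffness_pos {a b : ℝ} (hab : a ^ 2 + b ^ 2 ≤ 1) :
    0 < 0.00226 + 0.00807 * a ^ 2 + 0.00799 * b ^ 2 - 0.00389 * (a ^ 4 + b ^ 4) := by
  have ha : a ^ 4 ≤ a ^ 2 := by nlinarith [sq_nonneg a, sq_nonneg b]
  have hb : b ^ 4 ≤ b ^ 2 := by nlinarith [sq_nonneg a, sq_nonneg b]
  nlinarith [sq_nonneg a, sq_nonneg b]

/-- A combination of two squares with positive weights vanishes only at the origin. -/
theorem eq_zero_of_weighted_sq_add_eq_zero {a b P Q : ℝ} (hP : 0 < P) (hQ : 0 < Q)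
    (h : P * b ^ 2 + Q * a ^ 2 = 0) : a = 0 ∧ b = 0 := by
  have hb : 0 ≤ P * b ^ 2 := by positivity
  have ha : 0 ≤ Q * a ^ 2 := by positivity
  have hb' : P * b ^ 2 = 0 := by linarith
  have ha' : Q * a ^ 2 = 0 := by linarith
  simp_all [hP.ne', hQ.ne']

/-- The closed-loop aerostability system has exactly two equilibria on the
constraint manifold `H = {x | h(x) = 0}`. -/
theorem stmt_14 :
    {x : Fin 6 → ℝ | aeroH x = 0 ∧ aeroF x = 0} =
      {![0, 0, 0, 0, 0, 0], ![-2, 0, 0, 0, 0, 0]} := by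
  ext x
  simp only [Set.mem_ofPred_eq, Set.mem_insert_iff, Set.mem_singleton_iff]
  constructor
  · rintro ⟨hH, hF⟩
    have h0 := congrFun hF 0
    have h3 := congrFun hF 3
    have h4 := congrFun hF 4
    have h5 := congrFun hF 5
    simp only [aeroF, Pi.zero_apply, Matrix.cons_val] at h0 h3 h4 h5
    unfold aeroH at hH
    have x3 : x 3 = 0 := by linarith
    rw [x3] at h4 h5
    have hab : x 1 ^ 2 + x 2 ^ 2 ≤ 1 := by nlinarith [sq_nonneg (1 + x 0)]
    have hP := aero_stiffness_pos hab
    have hQ := aero_stiffness_pos ((add_comm _ _).trans_le hab)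
    -- The first equation makes the aerodynamic torque orthogonal to the pointing error.
    obtain ⟨x1, x2⟩ := eq_zero_of_weighted_sq_add_eq_zero (a := x 1) (b := x 2) hP hQ (by
      linear_combination -x 2 * h4 + x 1 * h5 + 0.32 * h0)
    rw [x1, x2] at hH h4 h5
    have x4 : x 4 = 0 := by linarith
    have x5 : x 5 = 0 := by linarith
    have hx : x 0 * (x 0 + 2) = 0 := by linarith
    rcases mul_eq_zero.mp hx with x0 | x0
    · left
      ext i
      fin_cases i <;> simp [x0, x1, x2, x3, x4, x5]
    · right
      have x0' : x 0 = -2 := by linarith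
      ext i
      fin_cases i <;> simp [x0', x1, x2, x3, x4, x5]
  · rintro (rfl | rfl)
    all_goals
      refine ⟨by simp [aeroH] <;> norm_num, ?_⟩
      ext i
      fin_cases i <;> simp [aeroF]
end
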